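/- arXiv:1308.5081 — 2 statements merged into one kernel-verified Lean document; each statement's English description precedes it below -/
import Mathlib

section
/- Let f ∈ C(𝕋), α > 0, n ∈ ℕ with n ≥ 1, and set c(α) = 1 + 3/(2α²). Then E_{n-1}(f) ≤ 2c(α)·W₂*(f, χ_{α/(2n)}). -/
/-!
Subtracting its mean, `f` may be taken of mean zero. Put `h = α / (2n)` and `W = W₂*(f, χ_h)`, so
that every centred interval mean of `f` of length `u ≤ h` is within `W` of `f`, and the iterated
mean `f * χ_u * χ_u` is within `2W` of `f`. Averaging these iterated means over `0 < u < h` with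
weight `12 h⁻⁴ (h - u) u²` gives a `C²` periodic function `g` with `‖f - g‖ ≤ 2W` and
`g'' = 12 h⁻² (f * χ_h * χ_h - f)`, hence `‖g''‖ ≤ 24 W / h²` (`exists_smooth_approx`).

Favard's inequality `E_{n-1}(g) ≤ ‖g''‖ / (32 n²)` (`favard`) then gives
`E_{n-1}(f) ≤ 2W + 24 W / (32 n² h²) = 2 (1 + 3 / (2α²)) W`.

To prove Favard's inequality, write `g` as its mean minus the convolution of `g''` with
`bern = B₂ / 2`. Replacing `bern` by a cosine polynomial `T` of degree `< n` produces a
trigonometric polynomial, at a cost of at most `‖g''‖ · ‖bern - T‖₁`. So one needs a `T` with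
`‖bern - T‖₁ = 1 / (32 n²)` (`exists_L1_approx`). The interpolant of the Poisson kernel at the zeros
of `cos (nθ)` is explicit, and its error has the sign of `cos (nθ)` (`poisson_interp`). Setting
`r = e⁻ˢ` and integrating against `s ds` on `(0, ∞)` turns `rᵏ` into `1 / k²`, i.e. the Poisson
kernel into a multiple of `bern`, and preserves the sign property (`exists_kernel`). Therefore
`‖bern - T‖₁ = ∫ (bern - T) · sgn cos (2πnt)`. The square wave is orthogonal to `T`
(`integral_cos_mul_sgnCos`), and its integral against `bern` is `1 / (32 n²)` by the multiplication
theorem for `B₂` (`integral_bern_mul_sgnCos`).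
-/

open MeasureTheory Real

/-- Uniform (sup) norm of a real function. -/
noncomputable def unorm (f : ℝ → ℝ) : ℝ := ⨆ u : ℝ, |f u|

/-- Convolution of two real functions. -/
noncomputable def conv (f g : ℝ → ℝ) : ℝ → ℝ := fun t => ∫ u : ℝ, f u * g (t - u)

/-- Normalized characteristic function of `(-h/2, h/2)`. -/
noncomputable def chi (h : ℝ) : ℝ → ℝ := fun t => if -h/2 < t ∧ t < h/2 then 1/h else 0

/-- Convolution powers `χ_h^k` (defined for `k ≥ 1`; junk value `0` at `k = 0`). -/
noncomputable def chiPow (h : ℝ) : ℕ → (ℝ → ℝ)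
  | 0 => fun _ => 0
  | 1 => chi h
  | (k+2) => conv (chiPow h (k+1)) (chi h)

/-- Special modulus of continuity `W₂(f, χ_h^k) = ‖f - f*χ_h^k‖`. -/
noncomputable def W2 (f : ℝ → ℝ) (h : ℝ) (k : ℕ) : ℝ :=
  unorm (fun t => f t - conv f (chiPow h k) t)

/-- `W₂*(f, χ_h^k) = sup_{0 < u ≤ h} W₂(f, χ_u^k)`. -/
noncomputable def W2star (f : ℝ → ℝ) (h : ℝ) (k : ℕ) : ℝ :=
  ⨆ u : Set.Ioc (0:ℝ) h, W2 f u.1 k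

/-- Second Peetre K-functional: infimum over twice continuously differentiable
1-periodic functions `g` of `‖f - g‖ + h² ‖D²g‖`. -/
noncomputable def K2 (f : ℝ → ℝ) (h : ℝ) : ℝ :=
  ⨅ g : {g : ℝ → ℝ // ContDiff ℝ 2 g ∧ Function.Periodic g 1},
    unorm (fun t => f t - g.1 t) + h^2 * unorm (iteratedDeriv 2 g.1)

/-- Generalized K-functional `K̃₂(f, h₁, h₂)`. -/
noncomputable def Ktilde2 (f : ℝ → ℝ) (h1 h2 : ℝ) : ℝ :=
  ⨅ p : {p : (ℝ → ℝ) × (ℝ → ℝ) //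
      (ContDiff ℝ 1 p.1 ∧ Function.Periodic p.1 1) ∧
      (ContDiff ℝ 2 p.2 ∧ Function.Periodic p.2 1)},
    unorm (fun t => f t - p.1.1 t) + h1 * unorm (deriv (fun t => p.1.1 t - p.1.2 t))
      + h2^2 * unorm (iteratedDeriv 2 p.1.2)

/-- Classical second modulus of smoothness. -/
noncomputable def omega2 (f : ℝ → ℝ) (h : ℝ) : ℝ :=
  ⨆ u : Set.Ioc (0:ℝ) h, ⨆ t : ℝ, |f (t + u.1) - 2 * f t + f (t - u.1)|

/-- `τ` is a real 1-periodic trigonometric polynomial of degree at most `n - 1`. -/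
def IsTrigPolyDegLT (n : ℕ) (τ : ℝ → ℝ) : Prop :=
  ∃ a b : ℕ → ℝ, ∀ t : ℝ, τ t =
    ∑ j ∈ Finset.range n, (a j * Real.cos (2 * Real.pi * j * t) + b j * Real.sin (2 * Real.pi * j * t))

/-- Best approximation `E_{n-1}(f)` by trigonometric polynomials of degree at most `n-1`. -/
noncomputable def bestApprox (n : ℕ) (f : ℝ → ℝ) : ℝ :=
  ⨅ τ : {τ : ℝ → ℝ // IsTrigPolyDegLT n τ}, unorm (fun t => f t - τ.1 t)

/-! ### Interpolation of the Poisson kernel -/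

/-- Closed form of the partial sums of `∑ rᵏ cos (kθ)`. It holds for every real `r`; the
interpolation of the Poisson kernel needs it at both `r` and `r⁻¹`. -/
lemma geom_cos_sum (r θ : ℝ) (n : ℕ) :
    (1 - 2 * r * cos θ + r ^ 2) * ∑ k ∈ Finset.range n, r ^ k * cos (k * θ)
      = 1 - r * cos θ - r ^ n * cos (n * θ) + r ^ (n + 1) * cos (n * θ - θ) := by
  induction n with
  | zero => simp
  | succ m ih =>
    rw [Finset.sum_range_succ, mul_add, ih]
    have h1 : ((m + 1 : ℕ) : ℝ) * θ = m * θ + θ := by push_cast; ring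
    rw [h1, add_sub_cancel_right, cos_add, cos_sub]
    ring

lemma hasSum_geom_cos {r : ℝ} (h0 : 0 ≤ r) (h1 : r < 1) (θ : ℝ) :
    HasSum (fun k : ℕ => r ^ (k + 1) * cos ((k + 1 : ℕ) * θ))
      ((r * cos θ - r ^ 2) / (1 - 2 * r * cos θ + r ^ 2)) := by
  have hΔ : 0 < 1 - 2 * r * cos θ + r ^ 2 := by
    nlinarith [cos_le_one θ, mul_le_mul_of_nonneg_left (cos_le_one θ) h0]
  have hs : Summable (fun k : ℕ => r ^ k * cos (k * θ)) := by
    refine Summable.of_norm_bounded (summable_geometric_of_lt_one h0 h1) fun k => ?_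
    rw [norm_mul, norm_of_nonneg (pow_nonneg h0 k)]
    exact mul_le_of_le_one_right (pow_nonneg h0 k) (abs_cos_le_one _)
  have ht : Filter.Tendsto (fun n : ℕ => (1 - 2 * r * cos θ + r ^ 2) *
      ∑ k ∈ Finset.range n, r ^ k * cos (k * θ)) Filter.atTop (nhds (1 - r * cos θ)) := by
    simp_rw [geom_cos_sum]
    have hb : ∀ c : ℕ → ℝ, Filter.Tendsto (fun n : ℕ => r ^ n * cos (c n))
        Filter.atTop (nhds 0) := fun c => by
      refine squeeze_zero_norm (fun n => ?_) (tendsto_pow_atTop_nhds_zero_of_lt_one h0 h1)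
      rw [norm_mul, norm_of_nonneg (pow_nonneg h0 n)]
      exact mul_le_of_le_one_right (pow_nonneg h0 n) (abs_cos_le_one _)
    have := ((tendsto_const_nhds (x := 1 - r * cos θ)).sub (hb fun n => n * θ)).add
      ((hb fun n => n * θ - θ).const_mul r)
    simp only [mul_zero, sub_zero, add_zero] at this
    refine this.congr fun n => ?_
    ring
  have he := tendsto_nhds_unique (hs.hasSum.tendsto_sum_nat.const_mul _) ht
  have h2 := (hasSum_nat_add_iff' 1).2 hs.hasSum
  have h3 : (r * cos θ - r ^ 2) / (1 - 2 * r * cos θ + r ^ 2) =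
      ∑' b : ℕ, r ^ b * cos (b * θ) - ∑ i ∈ Finset.range 1, r ^ i * cos (i * θ) := by
    rw [eq_div_of_mul_eq hΔ.ne' ((mul_comm _ _).trans he)]
    simp only [Finset.range_one, Finset.sum_singleton, pow_zero, Nat.cast_zero, zero_mul, cos_zero]
    rw [div_sub' hΔ.ne']
    ring
  rw [h3]
  exact h2

/-- Cosine coefficients of the trigonometric polynomial of degree `< n` that agrees with
`∑_{k ≥ 1} rᵏ cos (kθ) = (P_r(θ) - 1) / 2`, `P_r` the Poisson kernel, at the zeros of `cos (nθ)`. -/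
noncomputable def poissonCoeff (n : ℕ) (r : ℝ) (j : ℕ) : ℝ :=
  if j = 0 then -r ^ (2 * n) / (1 + r ^ (2 * n))
  else (r ^ j - r ^ (2 * n - j)) / (1 + r ^ (2 * n))

lemma abs_poissonCoeff_le {n j : ℕ} (hj : j < n) {r : ℝ} (h0 : 0 ≤ r) (h1 : r ≤ 1) :
    |poissonCoeff n r j| ≤ r := by
  have hp : 0 ≤ r ^ (2 * n) := by positivity
  have key : ∀ m : ℕ, m ≠ 0 → r ^ m ≤ r := fun m hm => pow_le_of_le_one h0 h1 hm
  unfold poissonCoeff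
  split_ifs with h
  · rw [abs_div, abs_neg, abs_of_nonneg hp, abs_of_pos (by positivity : 0 < 1 + r ^ (2 * n))]
    exact (div_le_self hp (by linarith)).trans (key _ (by omega))
  · have h2 : r ^ (2 * n - j) ≤ r ^ j := pow_le_pow_of_le_one h0 h1 (by omega)
    have h3 : 0 ≤ r ^ (2 * n - j) := by positivity
    rw [abs_div, abs_of_nonneg (by linarith), abs_of_pos (by positivity : 0 < 1 + r ^ (2 * n))]
    exact (div_le_self (by linarith) (by linarith)).trans (by linarith [key j h])

/-- The interpolation error of `(P_r - 1) / 2` is `rⁿ / (1 + r²ⁿ) · P_r(θ) · cos (nθ)`, so it has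
the sign of `cos (nθ)`. -/
lemma poisson_interp {n : ℕ} (hn : 1 ≤ n) {r : ℝ} (h0 : 0 < r) (h1 : r < 1) (θ : ℝ) :
    (r * cos θ - r ^ 2) / (1 - 2 * r * cos θ + r ^ 2)
      - ∑ j ∈ Finset.range n, poissonCoeff n r j * cos (j * θ)
      = cos (n * θ) * (r ^ n / (1 + r ^ (2 * n)) *
        ((1 - r ^ 2) / (1 - 2 * r * cos θ + r ^ 2))) := by
  have hΔ : 0 < 1 - 2 * r * cos θ + r ^ 2 := by
    nlinarith [cos_le_one θ, mul_le_mul_of_nonneg_left (cos_le_one θ) h0.le]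
  have hp : 0 < 1 + r ^ (2 * n) := by positivity
  -- the coefficients `rʲ - r²ⁿ⁻ʲ` split into two geometric sums, of ratios `r` and `r⁻¹`; the
  -- final `-1` corrects the coefficient at `j = 0`
  have hS : ∑ j ∈ Finset.range n, poissonCoeff n r j * cos (j * θ)
      = (∑ j ∈ Finset.range n, r ^ j * cos (j * θ)
        - r ^ (2 * n) * ∑ j ∈ Finset.range n, r⁻¹ ^ j * cos (j * θ) - 1) / (1 + r ^ (2 * n)) := by
    obtain ⟨m, rfl⟩ : ∃ m, n = m + 1 := ⟨n - 1, by omega⟩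
    rw [Finset.sum_range_succ', Finset.sum_range_succ', Finset.sum_range_succ', mul_add,
      Finset.mul_sum]
    have : ∑ k ∈ Finset.range m, poissonCoeff (m + 1) r (k + 1) * cos ((k + 1 : ℕ) * θ)
        = (∑ k ∈ Finset.range m, r ^ (k + 1) * cos ((k + 1 : ℕ) * θ)
        - ∑ k ∈ Finset.range m, r ^ (2 * (m + 1)) * (r⁻¹ ^ (k + 1) * cos ((k + 1 : ℕ) * θ)))
          / (1 + r ^ (2 * (m + 1))) := by
      rw [← Finset.sum_sub_distrib, Finset.sum_div]
      refine Finset.sum_congr rfl fun k hk => ?_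
      have hk' := Finset.mem_range.1 hk
      have : r ^ (2 * (m + 1) - (k + 1)) = r ^ (2 * (m + 1)) * r⁻¹ ^ (k + 1) := by
        rw [inv_pow, pow_sub₀ _ h0.ne' (by omega)]
      simp only [poissonCoeff, Nat.succ_ne_zero, if_false, this]
      ring
    rw [this]
    simp only [poissonCoeff, if_true, pow_zero, Nat.cast_zero, zero_mul, cos_zero]
    ring
  have e1 := geom_cos_sum r θ n
  have e2 := geom_cos_sum r⁻¹ θ n
  set A := ∑ j ∈ Finset.range n, r ^ j * cos (j * θ)
  set B := ∑ j ∈ Finset.range n, r⁻¹ ^ j * cos (j * θ)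
  have e3 : (1 - 2 * r * cos θ + r ^ 2) * (r ^ (2 * n) * B) =
      r ^ (2 * n) * (r ^ 2 - r * cos θ) - r ^ (n + 2) * cos (n * θ)
        + r ^ (n + 1) * cos (n * θ - θ) := by
    have : (1 - 2 * r * cos θ + r ^ 2) * (r ^ (2 * n) * B)
        = r ^ (2 * n) * r ^ 2 * ((1 - 2 * r⁻¹ * cos θ + r⁻¹ ^ 2) * B) := by
      field_simp
      ring
    rw [this, e2, inv_pow, inv_pow, pow_succ, pow_succ, two_mul, pow_add]
    field_simp
    ring
  have hh : r ^ (2 * n) = r ^ n * r ^ n := by rw [two_mul, pow_add]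
  rw [hS, sub_eq_iff_eq_add]
  generalize hD : 1 - 2 * r * cos θ + r ^ 2 = Δ at *
  field_simp
  linear_combination (-1 : ℝ) * e1 + e3 - hD

/-! ### Interpolation of the Bernoulli kernel -/

/-- The polynomial `B₂(t)/2`, which on `[0, 1]` is the kernel inverting the second derivative on
periodic functions of mean zero, up to sign. -/
noncomputable def bern (t : ℝ) : ℝ := t * (t - 1) / 2 + 1 / 12

/-- The Fourier series of `bern` on `[0, 1]`. -/
lemma hasSum_bern {t : ℝ} (ht : t ∈ Set.Icc (0 : ℝ) 1) :
    HasSum (fun k : ℕ => 1 / ((k + 1 : ℕ) : ℝ) ^ 2 * cos ((k + 1 : ℕ) * (2 * π * t)))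
      (2 * π ^ 2 * bern t) := by
  have h := hasSum_one_div_nat_pow_mul_cos one_ne_zero ht
  have h2 := (hasSum_nat_add_iff' 1).2 h
  have hB : (Polynomial.map (algebraMap ℚ ℝ) (Polynomial.bernoulli (2 * 1))).eval t
      = t ^ 2 - t + 1 / 6 := by
    simp [Polynomial.bernoulli, Finset.sum_range_succ, bernoulli_one, bernoulli_two]
    ring
  have hv : 2 * π ^ 2 * bern t = (-1 : ℝ) ^ (1 + 1) * (2 * π) ^ (2 * 1) / 2 / (2 * 1).factorial *
      (Polynomial.map (algebraMap ℚ ℝ) (Polynomial.bernoulli (2 * 1))).eval t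
        - ∑ i ∈ Finset.range 1, 1 / (i : ℝ) ^ (2 * 1) * cos (2 * π * i * t) := by
    rw [hB]
    simp [bern, Nat.factorial]
    ring
  rw [hv]
  refine h2.congr_fun ?_
  intro k
  rw [mul_one]
  congr 2
  ring

lemma integrableOn_mul_exp {b : ℝ} (hb : 0 < b) :
    IntegrableOn (fun s : ℝ => s * exp (-(b * s))) (Set.Ioi 0) := by
  have := integrableOn_rpow_mul_exp_neg_mul_rpow (s := 1) (p := 1) (by norm_num) one_pos hb
  simpa using this

lemma integral_mul_exp {b : ℝ} (hb : 0 < b) :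
    ∫ s in Set.Ioi (0 : ℝ), s * exp (-(b * s)) = 1 / b ^ 2 := by
  have := integral_rpow_mul_exp_neg_mul_Ioi (a := 2) (by norm_num) hb
  norm_num at this
  rw [this, one_div]

/-- With `abs_geom_cos_le`, this shows that `s` times the Poisson sum at `r = e⁻ˢ` is integrable on
`(0, ∞)` uniformly in the angle: `r / (1 - r)` is of order `1 / s` at `s = 0`. -/
lemma div_exp_bound {s : ℝ} (hs : 0 < s) : s * (exp (-s) / (1 - exp (-s))) ≤ exp (-(s / 2)) := by
  have h1 : exp (-s) < 1 := by simpa using hs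
  have h2 : s / 2 ≤ sinh (s / 2) := self_le_sinh_iff.2 (by linarith)
  rw [sinh_eq] at h2
  have h3 : exp (-s) = exp (-(s / 2)) ^ 2 := by rw [← exp_nat_mul]; congr 1; push_cast; ring
  have h4 : exp (s / 2) * exp (-(s / 2)) = 1 := by rw [← exp_add]; simp
  rw [mul_div_assoc', div_le_iff₀ (by linarith), h3]
  have h5 := exp_pos (-(s / 2))
  generalize exp (-(s / 2)) = y at *
  generalize exp (s / 2) = z at *
  have : s ≤ z - y := by linarith
  have h6 : s * y ^ 2 ≤ (z - y) * y ^ 2 := by gcongr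
  have h7 : (z - y) * y ^ 2 = y * (z * y) - y ^ 3 := by ring
  rw [h4] at h7
  linarith

lemma abs_geom_cos_le {r : ℝ} (h0 : 0 < r) (h1 : r < 1) (θ : ℝ) :
    |(r * cos θ - r ^ 2) / (1 - 2 * r * cos θ + r ^ 2)| ≤ r / (1 - r) := by
  have hc := cos_le_one θ
  have hc' := neg_one_le_cos θ
  have hΔ : 0 < 1 - 2 * r * cos θ + r ^ 2 := by
    nlinarith [mul_le_mul_of_nonneg_left (cos_le_one θ) h0.le]
  rw [abs_div, abs_of_pos hΔ, div_le_div_iff₀ hΔ (by linarith)]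
  have : |r * cos θ - r ^ 2| = r * |cos θ - r| := by
    rw [← abs_of_pos h0, ← abs_mul, abs_of_pos h0]; ring_nf
  rw [this, mul_assoc]
  refine mul_le_mul_of_nonneg_left ?_ h0.le
  rcases abs_cases (cos θ - r) with ⟨h, -⟩ | ⟨h, -⟩ <;> rw [h]
  · nlinarith
  · nlinarith [mul_nonneg (by linarith : 0 ≤ 1 - cos θ) (by linarith : 0 ≤ 1 - r),
      mul_nonneg (mul_nonneg (by linarith : 0 ≤ 1 - cos θ) h0.le) (by linarith : 0 ≤ 1 - r),
      mul_nonneg (by linarith : 0 ≤ 1 + cos θ) (sq_nonneg (1 - r)),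
      mul_nonneg (by linarith : 0 ≤ 1 - cos θ) h0.le]

/-- There is a cosine polynomial of degree `< n` whose difference from `bern` on `[0, 1]` is a
nonnegative multiple of `cos (2πnt)`. It is obtained from the interpolants of the Poisson kernel at
`r = e⁻ˢ` by integrating against `s ds`, because `∫ s e^{-ks} ds = 1 / k²`. -/
lemma exists_kernel {n : ℕ} (hn : 1 ≤ n) : ∃ (c : ℕ → ℝ) (H : ℝ → ℝ), ∀ t ∈ Set.Icc (0 : ℝ) 1,
    0 ≤ H t ∧ bern t - ∑ j ∈ Finset.range n, c j * cos (2 * π * j * t)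
      = cos (2 * π * n * t) * H t := by
  set μ : Measure ℝ := volume.restrict (Set.Ioi 0) with hμ
  have hr : ∀ s ∈ Set.Ioi (0 : ℝ), 0 < exp (-s) ∧ exp (-s) < 1 := fun s hs =>
    ⟨exp_pos _, by simpa using hs⟩
  have hsm : Summable fun k : ℕ => 1 / ((k + 1 : ℕ) : ℝ) ^ 2 :=
    (summable_nat_add_iff 1 (f := fun k : ℕ => 1 / (k : ℝ) ^ 2)).2
      (Real.summable_one_div_nat_pow.2 one_lt_two)
  -- coefficientwise integrability of the interpolants
  have hci : ∀ j < n, Integrable (fun s : ℝ => s * poissonCoeff n (exp (-s)) j) μ := by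
    intro j hj
    refine Integrable.mono' (g := fun s => s * exp (-(1 * s))) (integrableOn_mul_exp one_pos)
      ?_ ?_
    · refine (Measurable.aestronglyMeasurable ?_)
      unfold poissonCoeff
      split_ifs <;> fun_prop
    · refine (ae_restrict_iff' measurableSet_Ioi).2 (.of_forall fun s hs => ?_)
      rw [norm_mul, norm_of_nonneg (le_of_lt hs), one_mul]
      exact mul_le_mul_of_nonneg_left (abs_poissonCoeff_le hj (hr s hs).1.le (hr s hs).2.le)
        (le_of_lt hs)
  refine ⟨fun j => 1 / (2 * π ^ 2) * ∫ s, s * poissonCoeff n (exp (-s)) j ∂μ,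
    fun t => 1 / (2 * π ^ 2) * ∫ s, s * (exp (-s) ^ n / (1 + exp (-s) ^ (2 * n)) *
      ((1 - exp (-s) ^ 2) / (1 - 2 * exp (-s) * cos (2 * π * t) + exp (-s) ^ 2))) ∂μ,
    fun t ht => ⟨?_, ?_⟩⟩
  · refine mul_nonneg (by positivity) (setIntegral_nonneg measurableSet_Ioi fun s hs => ?_)
    obtain ⟨h0, h1⟩ := hr s hs
    have hs' : 0 < s := hs
    have hΔ : 0 < 1 - 2 * exp (-s) * cos (2 * π * t) + exp (-s) ^ 2 := by
      nlinarith [cos_le_one (2 * π * t), mul_le_mul_of_nonneg_left (cos_le_one (2 * π * t)) h0.le]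
    have : 0 ≤ 1 - exp (-s) ^ 2 := by nlinarith
    positivity
  · set θ := 2 * π * t
    have hPi : Integrable (fun s : ℝ => s * ((exp (-s) * cos θ - exp (-s) ^ 2) /
        (1 - 2 * exp (-s) * cos θ + exp (-s) ^ 2))) μ := by
      have hg : Integrable (fun s : ℝ => exp (-(1 / 2) * s)) μ :=
        integrableOn_exp_mul_Ioi (by norm_num) 0
      refine Integrable.mono' hg (Measurable.aestronglyMeasurable (by fun_prop)) ?_
      refine (ae_restrict_iff' measurableSet_Ioi).2 (.of_forall fun s hs => ?_)
      obtain ⟨h0, h1⟩ := hr s hs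
      rw [norm_mul, norm_of_nonneg (le_of_lt hs)]
      refine (mul_le_mul_of_nonneg_left (abs_geom_cos_le h0 h1 θ) (le_of_lt hs)).trans ?_
      refine (div_exp_bound hs).trans (le_of_eq ?_)
      congr 1; ring
    have hPv : ∫ s, s * ((exp (-s) * cos θ - exp (-s) ^ 2) /
        (1 - 2 * exp (-s) * cos θ + exp (-s) ^ 2)) ∂μ = 2 * π ^ 2 * bern t := by
      have hFi : ∀ k : ℕ, Integrable (fun s : ℝ =>
          s * exp (-(((k + 1 : ℕ) : ℝ) * s)) * cos ((k + 1 : ℕ) * θ)) μ := fun k =>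
        (integrableOn_mul_exp (by positivity)).mul_const _
      have hFn : Summable fun k : ℕ => ∫ s, ‖s * exp (-(((k + 1 : ℕ) : ℝ) * s)) *
          cos ((k + 1 : ℕ) * θ)‖ ∂μ := by
        refine Summable.of_nonneg_of_le (fun k => integral_nonneg fun s => norm_nonneg _)
          (fun k => ?_) hsm
        rw [← integral_mul_exp (b := ((k + 1 : ℕ) : ℝ)) (by positivity)]
        refine setIntegral_mono_on (hFi k).norm (integrableOn_mul_exp (by positivity))
          measurableSet_Ioi fun s hs => ?_
        have hs' : 0 < s := hs
        rw [norm_mul, norm_of_nonneg (by positivity)]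
        exact mul_le_of_le_one_right (by positivity) (abs_cos_le_one _)
      have h := hasSum_integral_of_summable_integral_norm hFi hFn
      have h' : HasSum (fun k : ℕ => ∫ s, s * exp (-(((k + 1 : ℕ) : ℝ) * s)) *
          cos ((k + 1 : ℕ) * θ) ∂μ) (2 * π ^ 2 * bern t) := by
        convert hasSum_bern ht using 2 with k
        rw [integral_mul_const, integral_mul_exp (by positivity)]
      rw [← h.unique h']
      refine setIntegral_congr_fun measurableSet_Ioi fun s hs => ?_
      obtain ⟨h0, h1⟩ := hr s hs
      have := ((hasSum_geom_cos h0.le h1 θ).mul_left s).tsum_eq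
      rw [← this]
      refine tsum_congr fun k => ?_
      rw [← exp_nat_mul]
      ring_nf
    have hb : bern t = 1 / (2 * π ^ 2) * ∫ s, s * ((exp (-s) * cos θ - exp (-s) ^ 2) /
        (1 - 2 * exp (-s) * cos θ + exp (-s) ^ 2)) ∂μ := by
      rw [hPv]; field_simp
    have hsum : ∑ j ∈ Finset.range n, (1 / (2 * π ^ 2) *
        ∫ s, s * poissonCoeff n (exp (-s)) j ∂μ) * cos (2 * π * j * t)
        = 1 / (2 * π ^ 2) * ∫ s, ∑ j ∈ Finset.range n,
          s * poissonCoeff n (exp (-s)) j * cos (j * θ) ∂μ := by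
      rw [integral_finsetSum _ fun j hj => (hci j (Finset.mem_range.1 hj)).mul_const _,
        Finset.mul_sum]
      refine Finset.sum_congr rfl fun j _ => ?_
      rw [integral_mul_const, mul_assoc]
      congr 3
      ring
    rw [hb, hsum, ← mul_sub, ← integral_sub hPi (integrable_finsetSum _ fun j hj =>
      (hci j (Finset.mem_range.1 hj)).mul_const _), mul_left_comm (cos _)]
    congr 1
    rw [← integral_const_mul]
    refine setIntegral_congr_fun measurableSet_Ioi fun s hs => ?_
    obtain ⟨h0, h1⟩ := hr s hs
    have h := poisson_interp hn h0 h1 θ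
    have h2 : cos (2 * π * n * t) = cos (n * θ) := by congr 1; simp only [θ]; ring
    rw [h2, mul_left_comm, ← h, mul_sub, Finset.mul_sum]
    simp only [mul_assoc]

/-! ### The square wave and the L¹ error -/

/-- The sign of `cos (2πnt)`. -/
noncomputable def sgnCos (n : ℕ) (t : ℝ) : ℝ :=
  if 0 < cos (2 * π * n * t) then 1 else if cos (2 * π * n * t) < 0 then -1 else 0

lemma sgnCos_mul (n : ℕ) (t : ℝ) : cos (2 * π * n * t) * sgnCos n t = |cos (2 * π * n * t)| := by
  unfold sgnCos
  split_ifs with h1 h2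
  · rw [abs_of_pos h1, mul_one]
  · rw [abs_of_neg h2]; ring
  · rw [le_antisymm (not_lt.1 h1) (not_lt.1 h2)]; simp

lemma abs_sgnCos_le (n : ℕ) (t : ℝ) : |sgnCos n t| ≤ 1 := by
  unfold sgnCos
  split_ifs <;> simp

lemma measurable_sgnCos (n : ℕ) : Measurable (sgnCos n) := by
  unfold sgnCos
  refine Measurable.ite (measurableSet_lt (by fun_prop) (by fun_prop)) (by fun_prop)
    (Measurable.ite (measurableSet_lt (by fun_prop) (by fun_prop)) (by fun_prop) (by fun_prop))

lemma intervalIntegrable_mul_sgnCos {g : ℝ → ℝ} (hg : Continuous g) (n : ℕ) (a b : ℝ) :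
    IntervalIntegrable (fun t => g t * sgnCos n t) volume a b := by
  have h := hg.intervalIntegrable (μ := volume) a b
  refine ⟨?_, ?_⟩
  · exact Integrable.mul_bdd (c := 1) h.1 (measurable_sgnCos n).aestronglyMeasurable
      (.of_forall fun t => abs_sgnCos_le n t)
  · exact Integrable.mul_bdd (c := 1) h.2 (measurable_sgnCos n).aestronglyMeasurable
      (.of_forall fun t => abs_sgnCos_le n t)

lemma sgnCos_congr {n m : ℕ} {s t : ℝ} (h : cos (2 * π * n * s) = cos (2 * π * m * t)) :
    sgnCos n s = sgnCos m t := by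
  unfold sgnCos; rw [h]

lemma sgnCos_periodic (n : ℕ) : Function.Periodic (sgnCos n) 1 := fun t => by
  refine sgnCos_congr ?_
  rw [show 2 * π * n * (t + 1) = 2 * π * n * t + n * (2 * π) by ring, cos_add_nat_mul_two_pi]

lemma sgnCos_add_half {n : ℕ} (hn : 1 ≤ n) (t : ℝ) :
    sgnCos n (t + 1 / (2 * n)) = -sgnCos n t := by
  have hn' : (n : ℝ) ≠ 0 := by positivity
  have : 2 * π * n * (t + 1 / (2 * n)) = 2 * π * n * t + π := by field_simp
  unfold sgnCos
  rw [this, cos_add_pi]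
  simp only [Left.neg_pos_iff, Left.neg_neg_iff]
  split_ifs with h1 h2 <;> linarith

/-- The square wave `sgnCos n` is orthogonal to cosine polynomials of degree `< n`: the shift by
`1 / (2n)` negates it and rotates the pair `cos (2πjt), sin (2πjt)` by an angle less than `π`. -/
lemma integral_cos_mul_sgnCos {n j : ℕ} (hj : j < n) :
    ∫ t in (0 : ℝ)..1, cos (2 * π * j * t) * sgnCos n t = 0 := by
  have hn : 1 ≤ n := by omega
  have hn' : (0 : ℝ) < n := by positivity
  set β : ℝ := 2 * π * j * (1 / (2 * n))
  have hβ : β = π * (j / n) := by simp only [β]; field_simp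
  have hβ0 : 0 ≤ β := by positivity
  have hβ1 : β < π := by
    rw [hβ]
    have : (j : ℝ) / n < 1 := by rw [div_lt_one hn']; exact_mod_cast hj
    nlinarith [pi_pos]
  have hc : -1 < cos β := by
    rw [← cos_pi]
    exact cos_lt_cos_of_nonneg_of_le_pi hβ0 le_rfl hβ1
  have hic : ∀ a b, IntervalIntegrable (fun t => cos (2 * π * j * t) * sgnCos n t) volume a b :=
    intervalIntegrable_mul_sgnCos (by fun_prop) n
  have his : ∀ a b, IntervalIntegrable (fun t => sin (2 * π * j * t) * sgnCos n t) volume a b :=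
    intervalIntegrable_mul_sgnCos (by fun_prop) n
  have hshift : ∀ g : ℝ → ℝ, Function.Periodic g 1 →
      ∫ t in (0 : ℝ)..1, g t = ∫ t in (0 : ℝ)..1, g (t + 1 / (2 * n)) := fun g hg => by
    rw [intervalIntegral.integral_comp_add_right, zero_add, add_comm (1 : ℝ)]
    simpa using hg.intervalIntegral_add_eq 0 (1 / (2 * n))
  have hang : ∀ t : ℝ, 2 * π * j * (t + 1) = 2 * π * j * t + j * (2 * π) := fun t => by ring
  have hang' : ∀ t : ℝ, 2 * π * j * (t + 1 / (2 * n)) = 2 * π * j * t + β := fun t => by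
    simp only [β]; ring
  set I := ∫ t in (0 : ℝ)..1, cos (2 * π * j * t) * sgnCos n t with hI
  set J := ∫ t in (0 : ℝ)..1, sin (2 * π * j * t) * sgnCos n t with hJ
  have e1 : I = sin β * J - cos β * I := by
    conv_lhs => rw [hI, hshift _ fun t => by
      simp only [sgnCos_periodic n t, hang, cos_add_nat_mul_two_pi]]
    rw [hI, hJ, ← intervalIntegral.integral_const_mul, ← intervalIntegral.integral_const_mul,
      ← intervalIntegral.integral_sub ((his 0 1).const_mul _) ((hic 0 1).const_mul _)]
    refine intervalIntegral.integral_congr fun t _ => ?_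
    simp only [sgnCos_add_half hn, hang', cos_add]
    ring
  have e2 : J = (-sin β) * I - cos β * J := by
    conv_lhs => rw [hJ, hshift _ fun t => by
      simp only [sgnCos_periodic n t, hang, sin_add_nat_mul_two_pi]]
    rw [hI, hJ, ← intervalIntegral.integral_const_mul, ← intervalIntegral.integral_const_mul,
      ← intervalIntegral.integral_sub ((hic 0 1).const_mul _) ((his 0 1).const_mul _)]
    refine intervalIntegral.integral_congr fun t _ => ?_
    simp only [sgnCos_add_half hn, hang', sin_add]
    ring
  have e3 : (2 + 2 * cos β) * I = 0 := by
    linear_combination (1 + cos β) * e1 + sin β * e2 - I * sin_sq_add_cos_sq β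
  rcases mul_eq_zero.1 e3 with h | h
  · linarith
  · exact h

lemma integral_bern (a b : ℝ) : ∫ t in a..b, bern t =
    (b ^ 3 / 6 - b ^ 2 / 4 + b / 12) - (a ^ 3 / 6 - a ^ 2 / 4 + a / 12) := by
  refine intervalIntegral.integral_eq_sub_of_hasDerivAt
    (f := fun t : ℝ => t ^ 3 / 6 - t ^ 2 / 4 + t / 12) (fun t _ => ?_) ?_
  · have := (((hasDerivAt_pow 3 t).div_const 6).sub ((hasDerivAt_pow 2 t).div_const 4)).add
      ((hasDerivAt_id t).div_const 12)
    refine this.congr_deriv ?_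
    simp [bern]; ring
  · unfold bern
    exact Continuous.intervalIntegrable (by fun_prop) _ _

lemma continuous_bern : Continuous bern := by unfold bern; fun_prop

lemma integral_bern_mul_sgnCos_one : ∫ t in (0 : ℝ)..1, bern t * sgnCos 1 t = 1 / 32 := by
  have hi : ∀ a b, IntervalIntegrable (fun t => bern t * sgnCos 1 t) volume a b :=
    intervalIntegrable_mul_sgnCos continuous_bern 1
  rw [← intervalIntegral.integral_add_adjacent_intervals (hi 0 (1 / 4)) (hi _ 1),
    ← intervalIntegral.integral_add_adjacent_intervals (hi (1 / 4) (3 / 4)) (hi _ 1)]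
  have h1 : ∫ t in (0 : ℝ)..(1 / 4), bern t * sgnCos 1 t = ∫ t in (0 : ℝ)..(1 / 4), bern t := by
    refine intervalIntegral.integral_congr_Ioo_of_le (by norm_num) fun t ht => ?_
    have : 0 < cos (2 * π * (1 : ℕ) * t) := cos_pos_of_mem_Ioo
      ⟨by push_cast; nlinarith [pi_pos, ht.1], by push_cast; nlinarith [pi_pos, ht.2]⟩
    simp only [sgnCos, this, if_true, mul_one]
  have h2 : ∫ t in (1 / 4 : ℝ)..(3 / 4), bern t * sgnCos 1 t
      = -∫ t in (1 / 4 : ℝ)..(3 / 4), bern t := by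
    rw [← intervalIntegral.integral_neg]
    refine intervalIntegral.integral_congr_Ioo_of_le (by norm_num) fun t ht => ?_
    have : cos (2 * π * (1 : ℕ) * t) < 0 := cos_neg_of_pi_div_two_lt_of_lt
      (by push_cast; nlinarith [pi_pos, ht.1]) (by push_cast; nlinarith [pi_pos, ht.2])
    simp only [sgnCos, this, not_lt.2 this.le, if_true, if_false, mul_neg, mul_one]
  have h3 : ∫ t in (3 / 4 : ℝ)..1, bern t * sgnCos 1 t = ∫ t in (3 / 4 : ℝ)..1, bern t := by
    refine intervalIntegral.integral_congr_Ioo_of_le (by norm_num) fun t ht => ?_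
    have : 0 < cos (2 * π * (1 : ℕ) * t) := by
      rw [← cos_sub_two_pi]
      exact cos_pos_of_mem_Ioo
        ⟨by push_cast; nlinarith [pi_pos, ht.1], by push_cast; nlinarith [pi_pos, ht.2]⟩
    simp only [sgnCos, this, if_true, mul_one]
  rw [h1, h2, h3, integral_bern, integral_bern, integral_bern]
  norm_num

/-- The multiplication theorem for the second Bernoulli polynomial. -/
lemma sum_bern {n : ℕ} (hn : 1 ≤ n) (x : ℝ) :
    ∑ j ∈ Finset.range n, bern (x / n + j / n) = bern x / n := by
  have hn' : (n : ℝ) ≠ 0 := by positivity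
  have h : ∀ m : ℕ, ∑ j ∈ Finset.range m, bern (x / n + j / n) =
      (m * x ^ 2 + x * (m * (m - 1)) + m * (m - 1) * (2 * m - 1) / 6) / (2 * n ^ 2)
      - (m * x + m * (m - 1) / 2) / (2 * n) + m / 12 := fun m => by
    induction m with
    | zero => simp
    | succ k ih =>
      rw [Finset.sum_range_succ, ih]
      simp only [bern]
      push_cast
      field_simp
      ring
  rw [h n]
  simp only [bern]
  field_simp
  ring

/-- The substitution `t = (x + k) / n` on the `k`-th of `n` equal subintervals reduces to `n = 1` by
the multiplication theorem. -/
lemma integral_bern_mul_sgnCos {n : ℕ} (hn : 1 ≤ n) :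
    ∫ t in (0 : ℝ)..1, bern t * sgnCos n t = 1 / (32 * n ^ 2) := by
  have hn' : (n : ℝ) ≠ 0 := by positivity
  have hi : ∀ a b, IntervalIntegrable (fun t => bern t * sgnCos n t) volume a b :=
    intervalIntegrable_mul_sgnCos continuous_bern n
  have h := intervalIntegral.sum_integral_adjacent_intervals (μ := volume)
    (f := fun t => bern t * sgnCos n t) (a := fun k : ℕ => (k : ℝ) / n) (n := n)
    fun k _ => hi _ _
  simp only [Nat.cast_zero, zero_div, div_self hn'] at h
  rw [← h]
  have hk : ∀ k : ℕ, ∫ t in (k / n : ℝ)..((k + 1 : ℕ) / n : ℝ), bern t * sgnCos n t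
      = (1 / n) * ∫ x in (0 : ℝ)..1, bern (x / n + k / n) * sgnCos 1 x := fun k => by
    have hs : ∀ x : ℝ, sgnCos 1 x = sgnCos n (x / n + k / n) := fun x => by
      refine (sgnCos_congr ?_).symm
      rw [show 2 * π * n * (x / n + k / n) = 2 * π * (1 : ℕ) * x + k * (2 * π) by
        push_cast; field_simp, cos_add_nat_mul_two_pi]
    simp only [hs]
    rw [intervalIntegral.integral_comp_div_add (fun t => bern t * sgnCos n t) hn', smul_eq_mul,
      ← mul_assoc, one_div_mul_cancel hn', one_mul, zero_div, zero_add]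
    congr 1
    push_cast
    ring
  simp only [hk]
  rw [← Finset.mul_sum, ← intervalIntegral.integral_finsetSum fun k _ =>
    intervalIntegrable_mul_sgnCos (by unfold bern; fun_prop) 1 0 1]
  simp only [← Finset.sum_mul, sum_bern hn]
  simp only [div_mul_eq_mul_div, intervalIntegral.integral_div, integral_bern_mul_sgnCos_one]
  field_simp

/-- The kernel `bern` is approximated in `L¹[0, 1]` by a cosine polynomial of degree `< n` with
error `1 / (32 n²)`: the difference has the sign of `cos (2πnt)`, so its `L¹` norm is its integral
against `sgnCos n`, to which the polynomial contributes nothing. -/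
lemma exists_L1_approx {n : ℕ} (hn : 1 ≤ n) : ∃ c : ℕ → ℝ,
    ∫ t in (0 : ℝ)..1, |bern t - ∑ j ∈ Finset.range n, c j * cos (2 * π * j * t)|
      = 1 / (32 * n ^ 2) := by
  obtain ⟨c, H, hH⟩ := exists_kernel hn
  refine ⟨c, ?_⟩
  have h1 : ∫ t in (0 : ℝ)..1, |bern t - ∑ j ∈ Finset.range n, c j * cos (2 * π * j * t)|
      = ∫ t in (0 : ℝ)..1, (bern t * sgnCos n t
        - ∑ j ∈ Finset.range n, c j * (cos (2 * π * j * t) * sgnCos n t)) := by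
    refine intervalIntegral.integral_congr fun t ht => ?_
    rw [Set.uIcc_of_le zero_le_one] at ht
    obtain ⟨h0, he⟩ := hH t ht
    have : bern t * sgnCos n t - ∑ j ∈ Finset.range n, c j * (cos (2 * π * j * t) * sgnCos n t)
        = (bern t - ∑ j ∈ Finset.range n, c j * cos (2 * π * j * t)) * sgnCos n t := by
      rw [sub_mul, Finset.sum_mul]
      simp only [mul_assoc]
    simp only [this, he]
    rw [abs_mul, abs_of_nonneg h0, ← sgnCos_mul]
    ring
  have hi : ∀ j ∈ Finset.range n, IntervalIntegrable
      (fun t => c j * (cos (2 * π * j * t) * sgnCos n t)) volume 0 1 := fun j _ =>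
    (intervalIntegrable_mul_sgnCos (by fun_prop) n 0 1).const_mul _
  have hsum : IntervalIntegrable (fun t => ∑ j ∈ Finset.range n,
      c j * (cos (2 * π * j * t) * sgnCos n t)) volume 0 1 := by
    have e := IntervalIntegrable.sum (Finset.range n) hi
    have e1 : (∑ j ∈ Finset.range n, fun t => c j * (cos (2 * π * j * t) * sgnCos n t))
        = fun t => ∑ j ∈ Finset.range n, c j * (cos (2 * π * j * t) * sgnCos n t) := by
      funext t
      simp
    rwa [e1] at e
  rw [h1, intervalIntegral.integral_sub (intervalIntegrable_mul_sgnCos continuous_bern n 0 1) hsum,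
    intervalIntegral.integral_finsetSum hi, integral_bern_mul_sgnCos hn, Finset.sum_eq_zero,
    sub_zero]
  intro j hj
  rw [intervalIntegral.integral_const_mul, integral_cos_mul_sgnCos (Finset.mem_range.1 hj),
    mul_zero]

/-! ### Favard's inequality -/

/-- Favard's inequality of order two: a periodic `g` with `|g''| ≤ M` is within `M / (32 n²)` of a
trigonometric polynomial of degree `< n`. -/
lemma favard {n : ℕ} (hn : 1 ≤ n) {g g' φ : ℝ → ℝ} (hg : ∀ x, HasDerivAt g (g' x) x)
    (hg' : ∀ x, HasDerivAt g' (φ x) x) (hφ : Continuous φ) (pg : Function.Periodic g 1)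
    (pg' : Function.Periodic g' 1) (pφ : Function.Periodic φ 1) {M : ℝ} (hM : ∀ x, |φ x| ≤ M) :
    ∃ τ, IsTrigPolyDegLT n τ ∧ ∀ x, |g x - τ x| ≤ M * (1 / (32 * n ^ 2)) := by
  obtain ⟨c, hc⟩ := exists_L1_approx hn
  set T : ℝ → ℝ := fun t => ∑ j ∈ Finset.range n, c j * cos (2 * π * j * t) with hT
  have cT : Continuous T := by simp only [hT]; fun_prop
  have cg : Continuous g := continuous_iff_continuousAt.2 fun x => (hg x).continuousAt
  have cg' : Continuous g' := continuous_iff_continuousAt.2 fun x => (hg' x).continuousAt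
  -- two integrations by parts against `bern`
  have hrep : ∀ x, g x = (∫ t in (0 : ℝ)..1, g t) - ∫ t in (0 : ℝ)..1, bern t * φ (x + t) := by
    intro x
    have d1 : ∀ t, HasDerivAt (fun t => g (x + t)) (g' (x + t)) t := fun t =>
      (hg (x + t)).comp_const_add x t
    have d2 : ∀ t, HasDerivAt (fun t => g' (x + t)) (φ (x + t)) t := fun t =>
      (hg' (x + t)).comp_const_add x t
    have d3 : ∀ t, HasDerivAt bern (t - 1 / 2) t := fun t => by
      have := (((hasDerivAt_id t).mul ((hasDerivAt_id t).sub_const 1)).div_const 2).add_const (1 / 12)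
      refine this.congr_deriv ?_
      simp only [id]
      ring
    have d4 : ∀ t : ℝ, HasDerivAt (fun t : ℝ => t - 1 / 2) 1 t := fun t =>
      (hasDerivAt_id t).sub_const _
    have i1 := intervalIntegral.integral_mul_deriv_eq_deriv_mul (a := 0) (b := 1)
      (fun t _ => d3 t) (fun t _ => d2 t)
      (Continuous.intervalIntegrable (by fun_prop) _ _)
      (Continuous.intervalIntegrable (by fun_prop) _ _)
    have i2 := intervalIntegral.integral_mul_deriv_eq_deriv_mul (a := 0) (b := 1)
      (fun t _ => d4 t) (fun t _ => d1 t)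
      (Continuous.intervalIntegrable (by fun_prop) _ _)
      (Continuous.intervalIntegrable (by fun_prop) _ _)
    have i3 : ∫ t in (0 : ℝ)..1, g (x + t) = ∫ t in (0 : ℝ)..1, g t := by
      rw [intervalIntegral.integral_comp_add_left, add_zero]
      simpa using pg.intervalIntegral_add_eq x 0
    simp only [one_mul, i3] at i2
    rw [i1, i2, pg x, pg' x]
    simp only [bern, add_zero]
    ring
  refine ⟨fun x => (∫ t in (0 : ℝ)..1, g t) - ∫ t in (0 : ℝ)..1, T t * φ (x + t), ?_, ?_⟩
  · refine ⟨fun j => (if j = 0 then ∫ t in (0 : ℝ)..1, g t else 0)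
      - c j * ∫ t in (0 : ℝ)..1, cos (2 * π * j * t) * φ t,
      fun j => -(c j * ∫ t in (0 : ℝ)..1, sin (2 * π * j * t) * φ t), fun x => ?_⟩
    have pcos : ∀ j : ℕ, Function.Periodic (fun t => cos (2 * π * j * (t - x)) * φ t) 1 :=
      fun j t => by
        simp only [pφ t]
        rw [show 2 * π * j * (t + 1 - x) = 2 * π * j * (t - x) + j * (2 * π) by ring,
          cos_add_nat_mul_two_pi]
    have hj : ∀ j : ℕ, ∫ t in (0 : ℝ)..1, cos (2 * π * j * t) * φ (x + t)
        = cos (2 * π * j * x) * (∫ t in (0 : ℝ)..1, cos (2 * π * j * t) * φ t)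
          + sin (2 * π * j * x) * ∫ t in (0 : ℝ)..1, sin (2 * π * j * t) * φ t := fun j => by
      have e1 : ∫ t in (0 : ℝ)..1, cos (2 * π * j * t) * φ (x + t)
          = ∫ t in (0 : ℝ)..1, cos (2 * π * j * (t - x)) * φ t := by
        have h1 := intervalIntegral.integral_comp_add_left (a := 0) (b := 1)
          (fun t => cos (2 * π * j * (t - x)) * φ t) x
        have h2 := (pcos j).intervalIntegral_add_eq x 0
        simp only [add_sub_cancel_left, add_zero, zero_add] at h1 h2
        rw [h1, h2]
      rw [e1, ← intervalIntegral.integral_const_mul, ← intervalIntegral.integral_const_mul,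
        ← intervalIntegral.integral_add (Continuous.intervalIntegrable (by fun_prop) _ _)
          (Continuous.intervalIntegrable (by fun_prop) _ _)]
      refine intervalIntegral.integral_congr fun t _ => ?_
      simp only [mul_sub, cos_sub]
      ring
    have hTs : ∫ t in (0 : ℝ)..1, T t * φ (x + t)
        = ∑ j ∈ Finset.range n, c j * ∫ t in (0 : ℝ)..1, cos (2 * π * j * t) * φ (x + t) := by
      simp only [hT, Finset.sum_mul]
      rw [intervalIntegral.integral_finsetSum fun j _ =>
        Continuous.intervalIntegrable (by fun_prop) _ _]
      simp only [mul_assoc, intervalIntegral.integral_const_mul]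
    have h0 : (∫ t in (0 : ℝ)..1, g t) = ∑ j ∈ Finset.range n,
        (if j = 0 then ∫ t in (0 : ℝ)..1, g t else 0) * cos (2 * π * j * x) := by
      rw [Finset.sum_eq_single_of_mem 0 (Finset.mem_range.2 (by omega)) fun j _ hj0 => by
        simp [hj0]]
      simp
    simp only
    rw [hTs, h0, ← Finset.sum_sub_distrib, ← h0]
    refine Finset.sum_congr rfl fun j _ => ?_
    rw [hj]
    ring
  · intro x
    have cb := continuous_bern
    have e : g x - ((∫ t in (0 : ℝ)..1, g t) - ∫ t in (0 : ℝ)..1, T t * φ (x + t))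
        = -∫ t in (0 : ℝ)..1, (bern t - T t) * φ (x + t) := by
      simp only [sub_mul]
      rw [intervalIntegral.integral_sub
        (Continuous.intervalIntegrable (by fun_prop) _ _)
        (Continuous.intervalIntegrable (by fun_prop) _ _)]
      rw [hrep x]
      ring
    rw [e, abs_neg]
    have h1 : |∫ t in (0 : ℝ)..1, (bern t - T t) * φ (x + t)|
        ≤ ∫ t in (0 : ℝ)..1, |bern t - T t| * M := by
      refine (intervalIntegral.abs_integral_le_integral_abs zero_le_one).trans ?_
      refine intervalIntegral.integral_mono_on zero_le_one
        (Continuous.intervalIntegrable (by fun_prop) _ _)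
        (Continuous.intervalIntegrable (by fun_prop) _ _) fun t _ => ?_
      rw [abs_mul]
      exact mul_le_mul_of_nonneg_left (hM _) (abs_nonneg _)
    rw [intervalIntegral.integral_mul_const, hc] at h1
    linarith

/-! ### Steklov smoothing -/

lemma exists_periodic_antideriv {f : ℝ → ℝ} (hf : Continuous f) (pf : Function.Periodic f 1)
    (h0 : ∫ t in (0 : ℝ)..1, f t = 0) : ∃ F : ℝ → ℝ, Function.Periodic F 1 ∧
      (∫ t in (0 : ℝ)..1, F t = 0) ∧ Continuous F ∧ ∀ x, HasDerivAt F (f x) x := by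
  set G : ℝ → ℝ := fun x => ∫ t in (0 : ℝ)..x, f t with hG
  have dG : ∀ x, HasDerivAt G (f x) x := fun x => hf.integral_hasStrictDerivAt 0 x |>.hasDerivAt
  have cG : Continuous G := continuous_iff_continuousAt.2 fun x => (dG x).continuousAt
  have pG : Function.Periodic G 1 := fun x => by
    have h := pf.intervalIntegral_add_eq x 0
    rw [zero_add, h0] at h
    simp only [hG]
    rw [← intervalIntegral.integral_add_adjacent_intervals (hf.intervalIntegrable 0 x)
      (hf.intervalIntegrable x _), h, add_zero]
  refine ⟨fun x => G x - ∫ t in (0 : ℝ)..1, G t, fun x => by simp only [pG x], ?_, by fun_prop,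
    fun x => (dG x).sub_const _⟩
  rw [intervalIntegral.integral_sub (cG.intervalIntegrable _ _) (by simp)]
  simp

/-- Steklov smoothing. If `f` has mean zero and its interval means of length at most `h` differ
from `f` by at most `W`, then `f` is within `2W` of a periodic `C²` function with second
derivative at most `24 W / h²`. Writing `Δᵤ` for the central second difference of step `u` and `F₂`, `F₄` for the
second and fourth periodic antiderivatives, the function is
`12 h⁻⁴ (Δₕ F₄ - h² F₂) = 12 h⁻⁴ ∫₀ʰ (h - u) Δᵤ F₂ du`, an average of the iterated means
`u⁻² Δᵤ F₂`, and its second derivative is `12 h⁻² (h⁻² Δₕ F₂ - f)`. -/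
lemma exists_smooth_approx {f : ℝ → ℝ} (hf : Continuous f) (pf : Function.Periodic f 1)
    (h0 : ∫ t in (0 : ℝ)..1, f t = 0) {h W : ℝ} (hh : 0 < h)
    (hW : ∀ u, 0 < u → u ≤ h → ∀ x, |f x - 1 / u * ∫ t in (x - u / 2)..(x + u / 2), f t| ≤ W) :
    ∃ g g' φ : ℝ → ℝ, (∀ x, HasDerivAt g (g' x) x) ∧ (∀ x, HasDerivAt g' (φ x) x) ∧
      Continuous φ ∧ Function.Periodic g 1 ∧ Function.Periodic g' 1 ∧ Function.Periodic φ 1 ∧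
      (∀ x, |φ x| ≤ 24 * W / h ^ 2) ∧ ∀ x, |f x - g x| ≤ 2 * W := by
  obtain ⟨F1, p1, z1, c1, d1⟩ := exists_periodic_antideriv hf pf h0
  obtain ⟨F2, p2, z2, c2, d2⟩ := exists_periodic_antideriv c1 p1 z1
  obtain ⟨F3, p3, z3, c3, d3⟩ := exists_periodic_antideriv c2 p2 z2
  obtain ⟨F4, p4, z4, c4, d4⟩ := exists_periodic_antideriv c3 p3 z3
  -- the iterated mean `u⁻² Δᵤ F₂` is within `2W` of `f`
  have hA : ∀ u, 0 < u → u ≤ h → ∀ x,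
      |F2 (x + u) + F2 (x - u) - 2 * F2 x - u ^ 2 * f x| ≤ 2 * W * u ^ 2 := by
    intro u hu huh x
    set m : ℝ → ℝ := fun y => 1 / u * ∫ t in (y - u / 2)..(y + u / 2), f t with hm
    have hm' : ∀ y, m y = 1 / u * (F1 (y + u / 2) - F1 (y - u / 2)) := fun y => by
      simp only [hm]
      rw [intervalIntegral.integral_eq_sub_of_hasDerivAt (fun t _ => d1 t)
        (hf.intervalIntegrable _ _)]
    have cm : Continuous m := by
      rw [funext hm']; fun_prop
    have e1 : ∫ y in (x - u / 2)..(x + u / 2), m y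
        = 1 / u * (F2 (x + u) + F2 (x - u) - 2 * F2 x) := by
      rw [intervalIntegral.integral_eq_sub_of_hasDerivAt
        (f := fun y => 1 / u * (F2 (y + u / 2) - F2 (y - u / 2))) (fun t _ => ?_)
        (cm.intervalIntegrable _ _)]
      · rw [show x + u / 2 + u / 2 = x + u by ring, show x + u / 2 - u / 2 = x by ring,
          show x - u / 2 + u / 2 = x by ring, show x - u / 2 - u / 2 = x - u by ring]
        ring
      · rw [hm']
        exact (((d2 _).comp_add_const t (u / 2)).sub ((d2 _).comp_sub_const t (u / 2))).const_mul _
    have e2 : |∫ y in (x - u / 2)..(x + u / 2), (f y - m y)| ≤ W * u := by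
      have := intervalIntegral.norm_integral_le_of_norm_le_const (a := x - u / 2) (b := x + u / 2)
        (f := fun y => f y - m y) (C := W) fun y _ => hW u hu huh y
      rwa [show x + u / 2 - (x - u / 2) = u by ring, abs_of_pos hu] at this
    rw [intervalIntegral.integral_sub (hf.intervalIntegrable _ _) (cm.intervalIntegrable _ _),
      e1] at e2
    have e3 : F2 (x + u) + F2 (x - u) - 2 * F2 x - u ^ 2 * f x = -(u ^ 2 * (f x - m x)
        + u * ((∫ y in (x - u / 2)..(x + u / 2), f y)
          - 1 / u * (F2 (x + u) + F2 (x - u) - 2 * F2 x))) := by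
      simp only [hm]
      field_simp
      ring
    have e4 := hW u hu huh x
    rw [e3, abs_neg]
    refine (abs_add_le _ _).trans ?_
    rw [abs_mul, abs_mul, abs_of_pos hu, abs_of_pos (pow_pos hu 2)]
    have e5 := mul_le_mul_of_nonneg_left e2 hu.le
    have e6 := mul_le_mul_of_nonneg_left e4 (pow_pos hu 2).le
    calc _ ≤ u ^ 2 * W + u * (W * u) := add_le_add e6 e5
      _ = _ := by ring
  have hW0 : 0 ≤ W := (abs_nonneg _).trans (hW h hh le_rfl 0)
  have dd : ∀ {F G : ℝ → ℝ} (_ : ∀ x, HasDerivAt F (G x) x) (x : ℝ),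
      HasDerivAt (fun x => F (x + h) + F (x - h) - 2 * F x)
        (G (x + h) + G (x - h) - 2 * G x) x := fun {F G} hF x =>
    ((((hF _).comp_add_const x h).add ((hF _).comp_sub_const x h)).sub ((hF x).const_mul 2))
  have pp : ∀ {F : ℝ → ℝ} (_ : Function.Periodic F 1) (x : ℝ),
      F (x + 1 + h) + F (x + 1 - h) - 2 * F (x + 1) = F (x + h) + F (x - h) - 2 * F x :=
    fun {F} hF x => by
      rw [show x + 1 + h = x + h + 1 by ring, show x + 1 - h = x - h + 1 by ring, hF, hF, hF]
  refine ⟨fun x => 12 / h ^ 4 * ((F4 (x + h) + F4 (x - h) - 2 * F4 x) - h ^ 2 * F2 x),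
    fun x => 12 / h ^ 4 * ((F3 (x + h) + F3 (x - h) - 2 * F3 x) - h ^ 2 * F1 x),
    fun x => 12 / h ^ 4 * ((F2 (x + h) + F2 (x - h) - 2 * F2 x) - h ^ 2 * f x),
    fun x => ((dd d4 x).sub ((d2 x).const_mul _)).const_mul _,
    fun x => ((dd d3 x).sub ((d1 x).const_mul _)).const_mul _, by fun_prop,
    fun x => by simp only [pp p4, p2 x], fun x => by simp only [pp p3, p1 x],
    fun x => by simp only [pp p2, pf x], fun x => ?_, fun x => ?_⟩
  · rw [abs_mul, abs_of_pos (by positivity)]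
    calc _ ≤ 12 / h ^ 4 * (2 * W * h ^ 2) := by gcongr; exact hA h hh le_rfl x
      _ = _ := by field_simp; ring
  · -- the remainder `R`, as a function of `u`, vanishes to second order at `u = 0` and has second
    -- derivative bounded by `2 W u²` by `hA`, which gives `|R u| ≤ 2 W u⁴ / 12`
    set R1 : ℝ → ℝ := fun u => F3 (x + u) - F3 (x - u) - 2 * u * F2 x - u ^ 3 / 3 * f x with hR1
    set R : ℝ → ℝ := fun u =>
      F4 (x + u) + F4 (x - u) - 2 * F4 x - u ^ 2 * F2 x - u ^ 4 / 12 * f x with hR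
    have dR1 : ∀ u, HasDerivAt R1 (F2 (x + u) + F2 (x - u) - 2 * F2 x - u ^ 2 * f x) u := by
      intro u
      have := ((((d3 _).comp_const_add x u).sub ((d3 _).comp_const_sub x u)).sub
        (((hasDerivAt_id u).const_mul 2).mul_const (F2 x))).sub
        (((hasDerivAt_pow 3 u).div_const 3).mul_const (f x))
      refine this.congr_deriv ?_
      push_cast
      ring
    have dR : ∀ u, HasDerivAt R (R1 u) u := by
      intro u
      have := (((((d4 _).comp_const_add x u).add ((d4 _).comp_const_sub x u)).sub_const
        (2 * F4 x)).sub ((hasDerivAt_pow 2 u).mul_const (F2 x))).sub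
        (((hasDerivAt_pow 4 u).div_const 12).mul_const (f x))
      refine this.congr_deriv ?_
      simp only [hR1]
      push_cast
      ring
    have bR1 : ∀ u ∈ Set.Icc 0 h, ‖R1 u‖ ≤ 2 * W * u ^ 3 / 3 := by
      intro u hu
      refine image_norm_le_of_norm_deriv_right_le_deriv_boundary (a := 0) (b := h)
        (B := fun u => 2 * W * u ^ 3 / 3) (B' := fun u => 2 * W * u ^ 2)
        (fun u _ => (dR1 u).continuousAt.continuousWithinAt)
        (fun u _ => (dR1 u).hasDerivWithinAt) (by simp [hR1]) (fun u => ?_) (fun u hu => ?_) hu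
      · refine (((hasDerivAt_pow 3 u).const_mul (2 * W)).div_const 3).congr_deriv ?_
        push_cast
        ring
      · rcases hu.1.eq_or_lt with rfl | hu0
        · simp [two_mul]
        · exact hA u hu0 hu.2.le x
    have bR : ∀ u ∈ Set.Icc 0 h, ‖R u‖ ≤ 2 * W * u ^ 4 / 12 := by
      intro u hu
      refine image_norm_le_of_norm_deriv_right_le_deriv_boundary (a := 0) (b := h)
        (B := fun u => 2 * W * u ^ 4 / 12) (B' := fun u => 2 * W * u ^ 3 / 3)
        (fun u _ => (dR u).continuousAt.continuousWithinAt)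
        (fun u _ => (dR u).hasDerivWithinAt) (by simp [hR, two_mul]) (fun u => ?_)
        (fun u hu => bR1 u ⟨hu.1, hu.2.le⟩) hu
      refine (((hasDerivAt_pow 4 u).const_mul (2 * W)).div_const 12).congr_deriv ?_
      push_cast
      ring
    have := bR h ⟨hh.le, le_rfl⟩
    have e : f x - 12 / h ^ 4 * ((F4 (x + h) + F4 (x - h) - 2 * F4 x) - h ^ 2 * F2 x)
        = -(12 / h ^ 4 * R h) := by
      simp only [hR]
      field_simp
      ring
    rw [e, abs_neg, abs_mul, abs_of_pos (by positivity)]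
    calc _ ≤ 12 / h ^ 4 * (2 * W * h ^ 4 / 12) := by gcongr; exact this
      _ = _ := by field_simp

/-! ### Means, moduli and best approximation -/

lemma conv_chi (f : ℝ → ℝ) {u : ℝ} (hu : 0 < u) (x : ℝ) :
    conv f (chiPow u 1) x = 1 / u * ∫ t in (x - u / 2)..(x + u / 2), f t := by
  have h1 : (fun v => f v * chiPow u 1 (x - v))
      = (Set.Ioo (x - u / 2) (x + u / 2)).indicator (fun v => 1 / u * f v) := by
    funext v
    by_cases hv : v ∈ Set.Ioo (x - u / 2) (x + u / 2)
    · rw [Set.indicator_of_mem hv]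
      have h2 : -u / 2 < x - v ∧ x - v < u / 2 := by
        constructor <;> linarith [hv.1, hv.2]
      simp only [chiPow, chi]
      rw [if_pos h2, mul_comm]
    · rw [Set.indicator_of_notMem hv]
      have h2 : ¬ (-u / 2 < x - v ∧ x - v < u / 2) := by
        intro h
        exact hv ⟨by linarith [h.2], by linarith [h.1]⟩
      simp only [chiPow, chi]
      rw [if_neg h2, mul_zero]
  unfold conv
  rw [h1, integral_indicator measurableSet_Ioo, integral_const_mul,
    intervalIntegral.integral_of_le (by linarith), integral_Ioc_eq_integral_Ioo]

lemma exists_abs_le_of_periodic {f : ℝ → ℝ} (hf : Continuous f) (pf : Function.Periodic f 1) :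
    ∃ C, ∀ x, |f x| ≤ C := by
  obtain ⟨C, hC⟩ := (pf.isBounded_of_continuous one_ne_zero hf).exists_norm_le
  exact ⟨C, fun x => hC (f x) ⟨x, rfl⟩⟩

/-- The two suprema defining `W2star` are over bounded sets because `f` is bounded, so they do bound
each of their terms. -/
lemma abs_sub_average_le_W2star {f : ℝ → ℝ} (hf : Continuous f) (pf : Function.Periodic f 1)
    {h u : ℝ} (hu : 0 < u) (huh : u ≤ h) (x : ℝ) :
    |f x - 1 / u * ∫ t in (x - u / 2)..(x + u / 2), f t| ≤ W2star f h 1 := by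
  obtain ⟨C, hC⟩ := exists_abs_le_of_periodic hf pf
  have key : ∀ v : ℝ, 0 < v → ∀ y, |f y - conv f (chiPow v 1) y| ≤ 2 * C := by
    intro v hv y
    rw [conv_chi f hv]
    have h1 : |∫ t in (y - v / 2)..(y + v / 2), f t| ≤ C * v := by
      have := intervalIntegral.norm_integral_le_of_norm_le_const (a := y - v / 2) (b := y + v / 2)
        (f := f) (C := C) (fun t _ => hC t)
      rw [show y + v / 2 - (y - v / 2) = v by ring, abs_of_pos hv] at this
      exact this
    have h2 : |1 / v * ∫ t in (y - v / 2)..(y + v / 2), f t| ≤ C := by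
      rw [abs_mul, abs_of_pos (by positivity : 0 < 1 / v), one_div, inv_mul_le_iff₀ hv]
      linarith
    calc _ ≤ |f y| + |1 / v * ∫ t in (y - v / 2)..(y + v / 2), f t| := abs_sub _ _
      _ ≤ 2 * C := by linarith [hC y]
  have hle : ∀ v : ℝ, 0 < v → W2 f v 1 ≤ 2 * C := fun v hv => ciSup_le (key v hv)
  have h1 : |f x - conv f (chiPow u 1) x| ≤ W2 f u 1 :=
    le_ciSup (f := fun y => |f y - conv f (chiPow u 1) y|)
      ⟨2 * C, by rintro _ ⟨y, rfl⟩; exact key u hu y⟩ x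
  have h2 : W2 f u 1 ≤ W2star f h 1 :=
    le_ciSup (f := fun v : Set.Ioc (0 : ℝ) h => W2 f v.1 1)
      ⟨2 * C, by rintro _ ⟨v, rfl⟩; exact hle v.1 v.2.1⟩ ⟨u, hu, huh⟩
  rw [← conv_chi f hu]
  exact h1.trans h2

lemma IsTrigPolyDegLT.add_const {n : ℕ} (hn : 1 ≤ n) {τ : ℝ → ℝ} (hτ : IsTrigPolyDegLT n τ)
    (m : ℝ) : IsTrigPolyDegLT n (fun x => τ x + m) := by
  obtain ⟨a, b, hab⟩ := hτ
  refine ⟨fun j => a j + if j = 0 then m else 0, b, fun t => ?_⟩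
  have h0 : (0 : ℕ) ∈ Finset.range n := Finset.mem_range.2 hn
  beta_reduce
  rw [hab t]
  have h1 : ∑ j ∈ Finset.range n, (if j = 0 then m else 0) * Real.cos (2 * Real.pi * j * t) = m := by
    rw [Finset.sum_eq_single_of_mem 0 h0]
    · simp
    · intro j _ hj
      simp [hj]
  nth_rewrite 1 [← h1]
  rw [← Finset.sum_add_distrib]
  refine Finset.sum_congr rfl fun j _ => ?_
  ring

lemma bestApprox_le {n : ℕ} {f τ : ℝ → ℝ} (hτ : IsTrigPolyDegLT n τ) {B : ℝ}
    (hB : ∀ x, |f x - τ x| ≤ B) : bestApprox n f ≤ B := by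
  refine (ciInf_le (f := fun σ : {σ : ℝ → ℝ // IsTrigPolyDegLT n σ} =>
    unorm (fun t => f t - σ.1 t)) ⟨0, ?_⟩ ⟨τ, hτ⟩).trans (ciSup_le hB)
  rintro _ ⟨σ, rfl⟩
  exact Real.iSup_nonneg fun _ => abs_nonneg _

/-- Theorem 3, inequality (4.2): `E_{n-1}(f) ≤ 2(1 + 3/(2α²))·W₂*(f, χ_{α/(2n)})`. -/
theorem stmt4 (f : ℝ → ℝ) (hf : Continuous f) (hper : Function.Periodic f 1)
    (α : ℝ) (hα : 0 < α) (n : ℕ) (hn : 1 ≤ n) :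
    bestApprox n f ≤ 2 * (1 + 3 / (2 * α^2)) * W2star f (α / (2 * n)) 1 := by
  have hn0 : (0 : ℝ) < n := by exact_mod_cast hn
  set h : ℝ := α / (2 * n) with hh
  have hpos : 0 < h := by positivity
  set W := W2star f h 1 with hW
  set m : ℝ := ∫ t in (0 : ℝ)..1, f t with hm
  have cf0 : Continuous fun x => f x - m := by fun_prop
  have pf0 : Function.Periodic (fun x => f x - m) 1 := fun x => by simp only [hper x]
  have h0 : ∫ t in (0 : ℝ)..1, (f t - m) = 0 := by
    rw [intervalIntegral.integral_sub (hf.intervalIntegrable _ _) (by simp)]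
    simp [hm]
  have hWf : ∀ u, 0 < u → u ≤ h → ∀ x,
      |(f x - m) - 1 / u * ∫ t in (x - u / 2)..(x + u / 2), (f t - m)| ≤ W := by
    intro u hu huh x
    have e : (f x - m) - 1 / u * ∫ t in (x - u / 2)..(x + u / 2), (f t - m)
        = f x - 1 / u * ∫ t in (x - u / 2)..(x + u / 2), f t := by
      rw [intervalIntegral.integral_sub (hf.intervalIntegrable _ _) (by simp),
        intervalIntegral.integral_const, smul_eq_mul]
      field_simp
      ring
    rw [e]
    exact abs_sub_average_le_W2star hf hper hu huh x
  obtain ⟨g, g', φ, hg, hg', cφ, pg, pg', pφ, hφ, hfg⟩ :=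
    exists_smooth_approx cf0 pf0 h0 hpos hWf
  obtain ⟨τ, hτ, hgτ⟩ := favard hn hg hg' cφ pg pg' pφ hφ
  refine bestApprox_le (hτ.add_const hn m) fun x => ?_
  have e : 2 * W + 24 * W / h ^ 2 * (1 / (32 * (n : ℝ) ^ 2)) = 2 * (1 + 3 / (2 * α ^ 2)) * W := by
    rw [hh]
    field_simp
    ring
  rw [← e]
  calc |f x - (τ x + m)| = |(f x - m - g x) + (g x - τ x)| := by ring_nf
    _ ≤ |f x - m - g x| + |g x - τ x| := abs_add_le _ _
    _ ≤ _ := add_le_add (hfg x) (hgτ x)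
end

section
/- Let f ∈ C(𝕋) and h > 0. Then W₂*(f, χ_h²) ≤ 2·W₂*(f, χ_h) ≤ 6·W₂*(f, χ_h²). -/
/-!
Write `A_v` for the averaging operator `g ↦ g * χ_v`, `A` for `A_u`,
`Δ_v g (t) = g (t + v) - 2 g t + g (t - v)`, and `M` for the supremum of `‖f - A_v² f‖` over `0 < v ≤ u`.

The left inequality holds because `f - A² f = (f - A f) + A (f - A f)` and `A` is a contraction of
the sup norm.

For the right one, put `k = A² f`. Then `f - A f = (f - k) - A (f - k) + (k - A k)`, where the first
two terms are at most `M` each (`abs_sub_avg_le`). Since `k'' = Δ_u f / u²`, Taylor's formula gives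
`|k - A k| ≤ ‖Δ_u f‖ / 24` (`abs_sub_avg_le_of_deriv2`), so everything rests on the estimate
`‖Δ_u f‖ ≤ 16 M` (`abs_secondDiff_le`). To see it, note that
`Δ_v k = (v² / u²) Δ_u (A_v² f)` (both are the same mixed difference of a second primitive of `f`),
which differs from `(v² / u²) Δ_u f` by at most `4 M v² / u²`. Now `A² k - k` is the integral of
`Δ_v k` against the weight `(u - v) / u²` on `[0, u]`, hence differs from `Δ_u f / 12` by at most
`M / 3`, whereas `‖A² k - k‖ = ‖A² (f - A² f)‖ ≤ M`. Altogether
`‖f - A f‖ ≤ 2 M + (16 / 24) M ≤ 3 M`.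
-/

open MeasureTheory Real

/-! ### Averages and primitives -/

/-- The mean value of `g` over the interval of length `u` centred at `t`. -/
noncomputable def avg (u : ℝ) (g : ℝ → ℝ) (t : ℝ) : ℝ := (∫ x in (t - u/2)..(t + u/2), g x) / u

/-- The primitive of `g` vanishing at `0`. -/
noncomputable def prim (g : ℝ → ℝ) (x : ℝ) : ℝ := ∫ y in (0:ℝ)..x, g y

lemma hasDerivAt_prim {g : ℝ → ℝ} (hg : Continuous g) (x : ℝ) : HasDerivAt (prim g) (g x) x :=
  intervalIntegral.integral_hasDerivAt_right (hg.intervalIntegrable _ _)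
    (hg.stronglyMeasurableAtFilter _ _) hg.continuousAt

lemma continuous_prim {g : ℝ → ℝ} (hg : Continuous g) : Continuous (prim g) :=
  continuous_iff_continuousAt.2 fun x => (hasDerivAt_prim hg x).continuousAt

lemma avg_eq_of_hasDerivAt {g G : ℝ → ℝ} (hg : Continuous g) (hG : ∀ x, HasDerivAt G (g x) x)
    (u t : ℝ) : avg u g t = (G (t + u/2) - G (t - u/2)) / u := by
  unfold avg
  rw [intervalIntegral.integral_eq_sub_of_hasDerivAt (fun x _ => hG x) (hg.intervalIntegrable _ _)]

lemma continuous_avg {g : ℝ → ℝ} (hg : Continuous g) (u : ℝ) : Continuous (avg u g) := by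
  have h1 : avg u g = fun t => (prim g (t + u/2) - prim g (t - u/2)) / u :=
    funext fun t => avg_eq_of_hasDerivAt hg (hasDerivAt_prim hg) u t
  have := continuous_prim hg
  rw [h1]
  fun_prop

/-- Averaging twice is a second difference of a second primitive. -/
lemma avg_avg_eq {g G H : ℝ → ℝ} (hg : Continuous g) (hG : ∀ x, HasDerivAt G (g x) x)
    (hH : ∀ x, HasDerivAt H (G x) x) (u t : ℝ) :
    avg u (avg u g) t = (H (t + u) - 2 * H t + H (t - u)) / u^2 := by
  have h1 : ∀ x, HasDerivAt (fun x => (H (x + u/2) - H (x - u/2)) / u) (avg u g x) x := by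
    intro x
    rw [avg_eq_of_hasDerivAt hg hG]
    exact (((hH _).comp_add_const x (u/2)).sub ((hH _).comp_sub_const x (u/2))).div_const u
  rw [avg_eq_of_hasDerivAt (continuous_avg hg u) h1]
  have e1 : t + u/2 + u/2 = t + u := by ring
  have e2 : t + u/2 - u/2 = t := by ring
  have e3 : t - u/2 + u/2 = t := by ring
  have e4 : t - u/2 - u/2 = t - u := by ring
  rw [e1, e2, e3, e4]
  by_cases hu : u = 0
  · simp [hu]
  · field_simp
    ring

lemma abs_avg_le {g : ℝ → ℝ} {u C : ℝ} (hu : 0 < u) (hC : ∀ x, |g x| ≤ C) (t : ℝ) :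
    |avg u g t| ≤ C := by
  have h1 := intervalIntegral.norm_integral_le_of_norm_le_const
    (a := t - u/2) (b := t + u/2) (f := g) (C := C) (fun x _ => hC x)
  have e : t + u/2 - (t - u/2) = u := by ring
  rw [e, Real.norm_eq_abs, abs_of_pos hu] at h1
  rw [avg, abs_div, abs_of_pos hu, div_le_iff₀ hu]
  exact h1

lemma avg_sub {g k : ℝ → ℝ} (hg : Continuous g) (hk : Continuous k) (u t : ℝ) :
    avg u (fun x => g x - k x) t = avg u g t - avg u k t := by
  unfold avg
  rw [intervalIntegral.integral_sub (hg.intervalIntegrable _ _) (hk.intervalIntegrable _ _), sub_div]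

/-! ### Taylor estimates and the bound for averages -/

/-- Integrating a power bound on the derivative. -/
lemma abs_le_of_deriv_pow {g g' : ℝ → ℝ} {u c : ℝ} (n : ℕ) (h0 : g 0 = 0)
    (hg : ∀ x, HasDerivAt g (g' x) x) (hb : ∀ x, 0 ≤ x → x ≤ u → |g' x| ≤ c * x^n) :
    ∀ x, 0 ≤ x → x ≤ u → |g x| ≤ c / (n + 1) * x^(n+1) := by
  intro x hx hxu
  have hB : ∀ x : ℝ, HasDerivAt (fun x : ℝ => c / (n + 1) * x^(n+1)) (c * x^n) x := by
    intro x
    have hn : (n : ℝ) + 1 ≠ 0 := by positivity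
    refine ((hasDerivAt_pow (n+1) x).const_mul (c / (n + 1))).congr_deriv ?_
    push_cast
    field_simp
  exact image_norm_le_of_norm_deriv_right_le_deriv_boundary (f := g) (f' := g') (a := 0) (b := u)
    (fun y _ => (hg y).continuousAt.continuousWithinAt) (fun y _ => (hg y).hasDerivWithinAt)
    (by simp [h0]) hB (fun y hy => hb y hy.1 hy.2.le) ⟨hx, hxu⟩

/-- Derivative of the even combination of the translates `G (t ± v)` as a function of `v`. -/
lemma hasDerivAt_even {G g : ℝ → ℝ} (hG : ∀ x, HasDerivAt G (g x) x) (t v : ℝ) :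
    HasDerivAt (fun v => G (t + v) + G (t - v)) (g (t + v) - g (t - v)) v :=
  (((hG _).comp_const_add t v).add ((hG _).comp_const_sub t v)).congr_deriv (by ring)

lemma hasDerivAt_odd {G g : ℝ → ℝ} (hG : ∀ x, HasDerivAt G (g x) x) (t v : ℝ) :
    HasDerivAt (fun v => G (t + v) - G (t - v)) (g (t + v) + g (t - v)) v :=
  (((hG _).comp_const_add t v).sub ((hG _).comp_const_sub t v)).congr_deriv (by ring)

/-- Midpoint rule error. -/
lemma abs_sub_avg_le_of_deriv2 {k k1 k2 : ℝ → ℝ} {u C : ℝ} (hu : 0 < u)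
    (hk : ∀ x, HasDerivAt k (k1 x) x) (hk1 : ∀ x, HasDerivAt k1 (k2 x) x)
    (hC : ∀ x, |k2 x| ≤ C) (t : ℝ) : |k t - avg u k t| ≤ C * u^2 / 24 := by
  have hkc : Continuous k := continuous_iff_continuousAt.2 fun x => (hk x).continuousAt
  have hK := hasDerivAt_prim hkc
  -- The odd difference of the primitive is Taylor expanded in `v`; its third derivative is
  -- `k2 (t + v) + k2 (t - v)`.
  have s1 := abs_le_of_deriv_pow (u := u) (c := 2 * C) 0 (by simp)
    (hasDerivAt_odd hk1 t) (fun x _ _ => by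
      have := abs_add_le (k2 (t + x)) (k2 (t - x))
      have := hC (t + x)
      have := hC (t - x)
      simp only [pow_zero]
      linarith)
  have s2 := abs_le_of_deriv_pow (u := u) 1 (by simp; ring)
    (fun x => (hasDerivAt_even hk t x).sub_const (2 * k t)) s1
  have s3 := abs_le_of_deriv_pow (u := u) 2
    (g := fun v => prim k (t + v) - prim k (t - v) - v * (2 * k t)) (by simp)
    (fun x => ((hasDerivAt_odd hK t x).sub ((hasDerivAt_id x).mul_const (2 * k t))).congr_deriv
      (by rw [one_mul])) s2
  have s4 := s3 (u/2) (by positivity) (by linarith)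
  rw [avg_eq_of_hasDerivAt hkc hK]
  have e : k t - (prim k (t + u/2) - prim k (t - u/2)) / u
      = -(prim k (t + u/2) - prim k (t - u/2) - u/2 * (2 * k t)) / u := by
    field_simp
    ring
  rw [e, abs_div, abs_neg, abs_of_pos hu, div_le_iff₀ hu]
  refine s4.trans (le_of_eq ?_)
  push_cast
  ring

/-- The second modulus of smoothness is controlled by the errors `f - A_v² f`, `0 < v ≤ u`. -/
lemma abs_secondDiff_le {f : ℝ → ℝ} (hf : Continuous f) {u M : ℝ} (hu : 0 < u)
    (hM : ∀ v, 0 < v → v ≤ u → ∀ t, |f t - avg v (avg v f) t| ≤ M) (t : ℝ) :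
    |f (t + u) - 2 * f t + f (t - u)| ≤ 16 * M := by
  set F := prim f with hFdef
  have hFc : Continuous F := continuous_prim hf
  have hF : ∀ x, HasDerivAt F (f x) x := hasDerivAt_prim hf
  set φ := prim F with hφdef
  have hφ : ∀ x, HasDerivAt φ (F x) x := hasDerivAt_prim hFc
  set k := avg u (avg u f) with hkdef
  have hkc : Continuous k := continuous_avg (continuous_avg hf u) u
  have hkeq : ∀ x, k x = (φ (x + u) - 2 * φ x + φ (x - u)) / u^2 := avg_avg_eq hf hF hφ u
  set K := prim k with hKdef
  have hKc : Continuous K := continuous_prim hkc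
  have hK : ∀ x, HasDerivAt K (k x) x := hasDerivAt_prim hkc
  have hL : ∀ x, HasDerivAt (prim K) (K x) x := hasDerivAt_prim hKc
  set D := (f (t + u) - 2 * f t + f (t - u)) / u^2 with hD
  have key : ∀ v, 0 ≤ v → v ≤ u → |k (t + v) + k (t - v) - 2 * k t - v^2 * D| ≤ 4 * M / u^2 * v^2 := by
    intro v hv hvu
    rcases hv.eq_or_lt with rfl | hv
    · have : k t + k t - 2 * k t = 0 := by ring
      simp [this]
    have a := hM v hv hvu
    have a1 := abs_le.1 (a (t + u))
    have a2 := abs_le.1 (a t)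
    have a3 := abs_le.1 (a (t - u))
    have b1 := avg_avg_eq hf hF hφ v (t + u)
    have b2 := avg_avg_eq hf hF hφ v t
    have b3 := avg_avg_eq hf hF hφ v (t - u)
    set E1 := avg v (avg v f) (t + u)
    set E2 := avg v (avg v f) t
    set E3 := avg v (avg v f) (t - u)
    -- The two second differences `Δ_v` and `Δ_u` of `φ` commute.
    have e : k (t + v) + k (t - v) - 2 * k t - v^2 * D
        = v^2 / u^2 * (-(f (t + u) - E1) + 2 * (f t - E2) - (f (t - u) - E3)) := by
      rw [hkeq, hkeq, hkeq, hD, b1, b2, b3]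
      have c1 : t + u + v = t + v + u := by ring
      have c2 : t + u - v = t - v + u := by ring
      have c3 : t - u + v = t + v - u := by ring
      have c4 : t - u - v = t - v - u := by ring
      rw [c1, c2, c3, c4]
      field_simp
      ring
    have hpos : 0 ≤ v^2 / u^2 := by positivity
    have h4 : |-(f (t + u) - E1) + 2 * (f t - E2) - (f (t - u) - E3)| ≤ 4 * M :=
      abs_le.2 ⟨by linarith, by linarith⟩
    rw [e, abs_mul, abs_of_nonneg hpos]
    calc _ ≤ v^2 / u^2 * (4 * M) := by gcongr
      _ = _ := by ring
  -- Two integrations in `v` of the bound `key`.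
  have s1 := abs_le_of_deriv_pow (u := u) 2
    (g := fun v => K (t + v) - K (t - v) - 2 * k t * v - v^3 / 3 * D) (by simp)
    (fun x => (((hasDerivAt_odd hK t x).sub ((hasDerivAt_id x).const_mul (2 * k t))).sub
      (((hasDerivAt_pow 3 x).div_const 3).mul_const D)).congr_deriv
      (by push_cast; ring)) key
  have s2 := abs_le_of_deriv_pow (u := u) 3
    (g := fun v => prim K (t + v) + prim K (t - v) - 2 * prim K t - k t * v^2 - v^4 / 12 * D)
    (by simp; ring)
    (fun x => ((((hasDerivAt_even hL t x).sub_const (2 * prim K t)).sub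
      ((hasDerivAt_pow 2 x).const_mul (k t))).sub
      (((hasDerivAt_pow 4 x).div_const 12).mul_const D)).congr_deriv
      (by push_cast; ring)) s1
  have s3 := s2 u hu.le le_rfl
  have hfk : ∀ x, |f x - k x| ≤ M := hM u hu le_rfl
  have s4 : |k t - avg u (avg u k) t| ≤ M := by
    have h1 : ∀ x, |avg u f x - avg u k x| ≤ M := fun x => by
      rw [← avg_sub hf hkc]
      exact abs_avg_le hu hfk x
    have h2 := abs_avg_le hu h1 t
    rwa [avg_sub (continuous_avg hf u) (continuous_avg hkc u), ← hkdef] at h2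
  have hsub := avg_avg_eq hkc hK hL u t
  have e : prim K (t + u) + prim K (t - u) - 2 * prim K t - k t * u^2 - u^4 / 12 * D
      = u^2 * (-(k t - avg u (avg u k) t) - (f (t + u) - 2 * f t + f (t - u)) / 12) := by
    rw [hsub, hD]
    field_simp
    ring
  have hu2 : 0 < u^2 := by positivity
  rw [e, abs_mul, abs_of_pos hu2] at s3
  have s5 : |-(k t - avg u (avg u k) t) - (f (t + u) - 2 * f t + f (t - u)) / 12| ≤ M / 3 := by
    refine le_of_mul_le_mul_left (s3.trans (le_of_eq ?_)) hu2
    push_cast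
    field_simp
    ring
  have s4 := abs_le.1 s4
  have s5 := abs_le.1 s5
  exact abs_le.2 ⟨by linarith, by linarith⟩

lemma abs_sub_avg_le {f : ℝ → ℝ} (hf : Continuous f) {u M : ℝ} (hu : 0 < u)
    (hM : ∀ v, 0 < v → v ≤ u → ∀ t, |f t - avg v (avg v f) t| ≤ M) (t : ℝ) :
    |f t - avg u f t| ≤ 3 * M := by
  have hF : ∀ x, HasDerivAt (prim f) (f x) x := hasDerivAt_prim hf
  have hφ : ∀ x, HasDerivAt (prim (prim f)) (prim f x) x := hasDerivAt_prim (continuous_prim hf)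
  set k := avg u (avg u f) with hkdef
  have hkc : Continuous k := continuous_avg (continuous_avg hf u) u
  have hfk : ∀ x, |f x - k x| ≤ M := hM u hu le_rfl
  have hM0 : 0 ≤ M := (abs_nonneg _).trans (hfk t)
  have hkeq : k = fun x => (prim (prim f) (x + u) - 2 * prim (prim f) x + prim (prim f) (x - u)) / u^2 :=
    funext (avg_avg_eq hf hF hφ u)
  have hd : ∀ {G g : ℝ → ℝ}, (∀ x, HasDerivAt G (g x) x) → ∀ x,
      HasDerivAt (fun x => (G (x + u) - 2 * G x + G (x - u)) / u^2)
        ((g (x + u) - 2 * g x + g (x - u)) / u^2) x := fun h x =>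
    ((((h _).comp_add_const x u).sub ((h x).const_mul 2)).add
      ((h _).comp_sub_const x u)).div_const _
  have hu2 : 0 < u^2 := by positivity
  have h1 := abs_sub_avg_le_of_deriv2 (C := 16 * M / u^2) hu (hd hφ) (hd hF) (fun x => by
    rw [abs_div, abs_of_pos hu2]
    gcongr
    exact abs_secondDiff_le hf hu hM x) t
  rw [← hkeq] at h1
  have e0 : 16 * M / u^2 * u^2 / 24 = 2 / 3 * M := by
    field_simp
    ring
  rw [e0] at h1
  have h2 := abs_avg_le hu hfk t
  rw [avg_sub hf hkc] at h2
  have h1 := abs_le.1 h1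
  have h2 := abs_le.1 h2
  have h3 := abs_le.1 (hfk t)
  have e : (prim (prim f) (t + u) - 2 * prim (prim f) t + prim (prim f) (t - u)) / u^2 = k t :=
    (congrFun hkeq t).symm
  rw [e] at h1
  exact abs_le.2 ⟨by linarith, by linarith⟩

lemma abs_sub_avg_avg_le {f : ℝ → ℝ} (hf : Continuous f) {u M : ℝ} (hu : 0 < u)
    (hM : ∀ t, |f t - avg u f t| ≤ M) (t : ℝ) : |f t - avg u (avg u f) t| ≤ 2 * M := by
  have h1 := abs_avg_le hu hM t
  rw [avg_sub hf (continuous_avg hf u)] at h1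
  have h1 := abs_le.1 h1
  have h2 := abs_le.1 (hM t)
  exact abs_le.2 ⟨by linarith, by linarith⟩

/-! ### Convolution with `chi` as an average, and the suprema -/

lemma chi_sub_eq (u t x : ℝ) :
    chi u (t - x) = (Set.Ioo (t - u/2) (t + u/2)).indicator (fun _ => 1/u) x := by
  unfold chi
  by_cases hx : x ∈ Set.Ioo (t - u/2) (t + u/2)
  · rw [Set.indicator_of_mem hx, if_pos]
    exact ⟨by linarith [hx.2], by linarith [hx.1]⟩
  · rw [Set.indicator_of_notMem hx, if_neg]
    rintro ⟨h1, h2⟩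
    exact hx ⟨by linarith, by linarith⟩

lemma conv_chi_s5 (g : ℝ → ℝ) {u : ℝ} (hu : 0 < u) : conv g (chi u) = avg u g := by
  funext t
  unfold conv avg
  have h1 : ∀ x, g x * chi u (t - x)
      = (Set.Ioo (t - u/2) (t + u/2)).indicator (fun x => g x * (1/u)) x := fun x => by
    rw [chi_sub_eq, Set.indicator_apply, Set.indicator_apply]
    split_ifs <;> simp
  simp_rw [h1]
  rw [integral_indicator measurableSet_Ioo, ← integral_Ioc_eq_integral_Ioo,
    ← intervalIntegral.integral_of_le (by linarith), intervalIntegral.integral_mul_const]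
  ring

lemma integrable_chi (u : ℝ) : Integrable (chi u) := by
  have h : chi u = (Set.Ioo (-u/2) (u/2)).indicator (fun _ => 1/u) := by
    funext x
    rw [Set.indicator_apply]
    rfl
  rw [h, integrable_indicator_iff measurableSet_Ioo]
  exact integrableOn_const (by simp)

/-- Associativity of convolution, by Fubini. -/
lemma conv_conv_chi {f : ℝ → ℝ} (hf : Continuous f) {C : ℝ} (hC : ∀ x, |f x| ≤ C) {u : ℝ} :
    conv f (conv (chi u) (chi u)) = conv (conv f (chi u)) (chi u) := by
  funext t
  have hint : Integrable (fun p : ℝ × ℝ => chi u p.2 * chi u (t - p.1 - p.2))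
      (volume.prod volume) := by
    have h0 := (integrable_chi u).convolution_integrand (ContinuousLinearMap.mul ℝ ℝ)
      (integrable_chi u)
    have h1 := (Measure.measurePreserving_sub_left (volume : Measure ℝ) t).prod
      (MeasurePreserving.id (volume : Measure ℝ))
    exact h1.integrable_comp_of_integrable h0
  have hint2 : Integrable (fun p : ℝ × ℝ => f p.1 * (chi u p.2 * chi u (t - p.1 - p.2)))
      (volume.prod volume) :=
    hint.bdd_mul (c := C) (hf.comp continuous_fst).aestronglyMeasurable
      (Filter.Eventually.of_forall fun p => hC p.1)
  calc conv f (conv (chi u) (chi u)) t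
      = ∫ x, ∫ w, f x * (chi u w * chi u (t - x - w)) := by
        simp only [conv, integral_const_mul]
    _ = ∫ w, ∫ x, f x * (chi u w * chi u (t - x - w)) := by
        exact integral_integral_swap hint2
    _ = ∫ w, conv f (chi u) (t - w) * chi u (t - (t - w)) := by
        congr 1
        funext w
        simp only [conv]
        rw [← integral_mul_const]
        congr 1
        funext x
        have e1 : t - x - w = t - w - x := by ring
        have e2 : t - (t - w) = w := by ring
        rw [e1, e2]
        ring
    _ = conv (conv f (chi u)) (chi u) t :=
        integral_sub_left_eq_self (fun y => conv f (chi u) y * chi u (t - y)) volume t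

lemma abs_le_unorm {g : ℝ → ℝ} {C : ℝ} (hC : ∀ x, |g x| ≤ C) (t : ℝ) : |g t| ≤ unorm g :=
  le_ciSup (f := fun x => |g x|) ⟨C, by rintro _ ⟨x, rfl⟩; exact hC x⟩ t

lemma unorm_le {g : ℝ → ℝ} {C : ℝ} (hC : ∀ x, |g x| ≤ C) : unorm g ≤ C := ciSup_le hC

lemma abs_le_W2star {f : ℝ → ℝ} {T : ℝ → ℝ → ℝ} {C h : ℝ} {n : ℕ}
    (hT : ∀ u, 0 < u → conv f (chiPow u n) = T u)
    (hC : ∀ u, 0 < u → ∀ t, |f t - T u t| ≤ C) {u : ℝ} (hu : 0 < u) (huh : u ≤ h) (t : ℝ) :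
    |f t - T u t| ≤ W2star f h n := by
  have hW : ∀ v, 0 < v → W2 f v n = unorm (fun t => f t - T v t) := fun v hv => by
    unfold W2
    rw [hT v hv]
  refine (abs_le_unorm (g := fun t => f t - T u t) (hC u hu) t).trans ?_
  rw [← hW u hu]
  refine le_ciSup (f := fun v : Set.Ioc (0:ℝ) h => W2 f v.1 n) ⟨C, ?_⟩ ⟨u, hu, huh⟩
  rintro _ ⟨v, rfl⟩
  simp only [hW v.1 v.2.1]
  exact unorm_le (hC v.1 v.2.1)

lemma W2star_le {f : ℝ → ℝ} {T : ℝ → ℝ → ℝ} {B h : ℝ} {n : ℕ} (hh : 0 < h)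
    (hT : ∀ u, 0 < u → conv f (chiPow u n) = T u)
    (hB : ∀ u, 0 < u → u ≤ h → ∀ t, |f t - T u t| ≤ B) : W2star f h n ≤ B := by
  have : Nonempty (Set.Ioc (0:ℝ) h) := ⟨⟨h, hh, le_rfl⟩⟩
  refine ciSup_le fun v => ?_
  unfold W2
  rw [hT v.1 v.2.1]
  exact unorm_le (hB v.1 v.2.1 v.2.2)

/-- Corollary 2: `W₂*(f, χ_h²) ≤ 2·W₂*(f, χ_h) ≤ 6·W₂*(f, χ_h²)`. -/
theorem stmt5 (f : ℝ → ℝ) (hf : Continuous f) (hper : Function.Periodic f 1)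
    (h : ℝ) (hh : 0 < h) :
    W2star f h 2 ≤ 2 * W2star f h 1 ∧ 2 * W2star f h 1 ≤ 6 * W2star f h 2 := by
  -- Boundedness of `f` makes all the suprema genuine.
  obtain ⟨C, hC⟩ : ∃ C, ∀ x, |f x| ≤ C := by
    obtain ⟨C, hC⟩ := isCompact_Icc.exists_bound_of_continuousOn (s := Set.Icc (0:ℝ) 1) hf.continuousOn
    refine ⟨C, fun x => ?_⟩
    obtain ⟨y, hy, hxy⟩ := hper.exists_mem_Ico₀ one_pos x
    rw [hxy]
    exact hC y ⟨hy.1, hy.2.le⟩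
  have hT1 : ∀ u, 0 < u → conv f (chiPow u 1) = avg u f := fun u hu => conv_chi_s5 f hu
  have hT2 : ∀ u, 0 < u → conv f (chiPow u 2) = avg u (avg u f) := fun u hu => by
    rw [← conv_chi_s5 f hu, ← conv_chi_s5 _ hu]
    exact conv_conv_chi hf hC
  have hB1 : ∀ u, 0 < u → ∀ t, |f t - avg u f t| ≤ 2 * C := fun u hu t => by
    have h1 := abs_sub (f t) (avg u f t)
    have h2 := abs_avg_le hu hC t
    have h3 := hC t
    linarith
  have hB2 : ∀ u, 0 < u → ∀ t, |f t - avg u (avg u f) t| ≤ 2 * (2 * C) := fun u hu t =>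
    abs_sub_avg_avg_le hf hu (hB1 u hu) t
  constructor
  · exact W2star_le hh hT2 fun u hu huh => abs_sub_avg_avg_le hf hu
      fun t => abs_le_W2star hT1 hB1 hu huh t
  · have : W2star f h 1 ≤ 3 * W2star f h 2 :=
      W2star_le hh hT1 fun u hu huh => abs_sub_avg_le hf hu
        fun v hv hvu t => abs_le_W2star hT2 hB2 hv (hvu.trans huh) t
    linarith
end
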